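/- Let T be a complete and open subtree of the tableau T_{φ0} and M^T the model induced by T. If ρ1 ∼_i ρ2 in M^T, then L(ρ1)|x = L(ρ2)|x for each x ∈ {K_i, ¬K_i, Kh_i, ¬Kh_i}, where L(ρ)|x denotes the set of formulas of syntactic form x in the label of the last node of ρ. -/

import Mathlib

/-!
Formalization of the logic of strategically knowing how (ELKh_n) and of the
tableau procedure for it.
-/

namespace ELKh

/-- Formulas of the language ELKh_n:
`φ ::= ⊥ | p | ¬φ | (φ ∧ φ) | K_i φ | Kh_i φ`. -/
inductive Formula (P I : Type) : Type
  | bot : Formula P I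
  | atom : P → Formula P I
  | neg : Formula P I → Formula P I
  | and : Formula P I → Formula P I → Formula P I
  | know : I → Formula P I → Formula P I
  | kh : I → Formula P I → Formula P I

variable {P I : Type}

/-- Models of ELKh_n: states with equivalence relations `∼ᵢ`, actions for each
agent, a transition relation for each action, and a valuation. -/
structure Model (P I : Type) where
  W : Type
  sim : I → W → W → Prop
  equiv : ∀ i, Equivalence (sim i)
  Act : I → Type
  R : (i : I) → Act i → W → W → Prop
  V : W → P → Prop

/-- Transition between `i`-equivalence classes (classes are represented by
member states): `[s]ⁱ →ₐ [t]ⁱ` iff some `s' ∈ [s]ⁱ`, `t' ∈ [t]ⁱ` have `R a s' t'`. -/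
def Model.ctrans (M : Model P I) (i : I) (a : M.Act i) (s t : M.W) : Prop :=
  ∃ s' t', M.sim i s s' ∧ M.sim i t t' ∧ M.R i a s' t'

/-- Uniformly executable strategies for agent `i`: partial functions from
`∼ᵢ`-equivalence classes to actions of `i` (hence constant on classes), whose
chosen action is executable at every member of the class. -/
structure Strategy (M : Model P I) (i : I) where
  act : M.W → Option (M.Act i)
  congr : ∀ s t, M.sim i s t → act s = act t
  exec : ∀ s a, act s = some a → ∀ t, M.sim i s t → ∃ u, M.R i a t u

namespace Strategy

variable {M : Model P I} {i : I}

/-- The `k`-th step of the sequence of classes `[δ 0][δ 1]⋯` is a σ-step. -/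
def Steps (σ : Strategy M i) (δ : ℕ → M.W) (k : ℕ) : Prop :=
  ∃ a, σ.act (δ k) = some a ∧ M.ctrans i a (δ k) (δ (k+1))

/-- `[δ 0]⋯[δ h]` is a (finite) possible execution of σ. -/
def FinExec (σ : Strategy M i) (δ : ℕ → M.W) (h : ℕ) : Prop :=
  ∀ k < h, σ.Steps δ k

/-- `[δ 0]⋯[δ h]` is a complete finite execution of σ (its end class is not in
the domain of σ). -/
def CompleteFinExec (σ : Strategy M i) (δ : ℕ → M.W) (h : ℕ) : Prop :=
  σ.FinExec δ h ∧ σ.act (δ h) = none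

/-- `[δ 0][δ 1]⋯` is an infinite possible execution of σ (such an execution is
automatically complete). -/
def InfExec (σ : Strategy M i) (δ : ℕ → M.W) : Prop :=
  ∀ k, σ.Steps δ k

end Strategy

/-- Satisfaction for ELKh_n.  `Kh_i φ` holds at `s` iff there is a strategy σ
for `i` such that all complete executions of σ starting from `[s]ⁱ` are finite
(equivalently: there is no infinite execution of σ from `[s]ⁱ`) and every state
of every end class of a complete (finite) execution from `[s]ⁱ` satisfies `φ`. -/
def Sat (M : Model P I) : M.W → Formula P I → Prop
  | _, .bot => False
  | s, .atom p => M.V s p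
  | s, .neg φ => ¬ Sat M s φ
  | s, .and φ ψ => Sat M s φ ∧ Sat M s ψ
  | s, .know i φ => ∀ t, M.sim i s t → Sat M t φ
  | s, .kh i φ => ∃ σ : Strategy M i,
      (∀ δ : ℕ → M.W, M.sim i s (δ 0) → ¬ σ.InfExec δ) ∧
      (∀ (δ : ℕ → M.W) (h : ℕ), M.sim i s (δ 0) → σ.CompleteFinExec δ h →
        ∀ t, M.sim i (δ h) t → Sat M t φ)

/-! ### Subformulas -/

/-- The set of subformulas of a formula. -/
def subf : Formula P I → Set (Formula P I)
  | .bot => {Formula.bot}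
  | .atom p => {Formula.atom p}
  | .neg φ => insert (Formula.neg φ) (subf φ)
  | .and φ ψ => insert (Formula.and φ ψ) (subf φ ∪ subf ψ)
  | .know i φ => insert (Formula.know i φ) (subf φ)
  | .kh i φ => insert (Formula.kh i φ) (subf φ)

/-- `sub⁺(φ₀) = {ψ, ¬ψ : ψ subformula of φ₀} ∪ {Kᵢψ, ¬Kᵢψ : Khᵢψ subformula of φ₀}`. -/
def subPlus (φ0 : Formula P I) : Set (Formula P I) :=
  {χ | ∃ ψ ∈ subf φ0, χ = ψ ∨ χ = Formula.neg ψ} ∪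
  {χ | ∃ i ψ, Formula.kh i ψ ∈ subf φ0 ∧
      (χ = Formula.know i ψ ∨ χ = Formula.neg (Formula.know i ψ))}

/-- `∼ψ`:  `∼¬χ = χ`, and `∼ψ = ¬ψ` otherwise. -/
def simNeg : Formula P I → Formula P I
  | .neg χ => χ
  | ψ => Formula.neg ψ

/-! ### Labeled trees -/

/-- Labels of tableau edges: `ε`, an agent `i`, or an action `a_{Khᵢψ}`. -/
inductive ELabel (P I : Type) : Type
  | eps : ELabel P I
  | ag : I → ELabel P I
  | act : I → Formula P I → ELabel P I

/-- Labeled rooted trees: each node is labeled with a set of formulas, each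
non-root node carries the label of the edge connecting it to its parent, and
`blockedBy n = some n'` records that the node `n` is blocked by `n'`. -/
structure LTree (P I : Type) where
  Node : Type
  root : Node
  parent : Node → Option Node
  depth : Node → ℕ
  label : Node → Set (Formula P I)
  elabel : Node → ELabel P I
  blockedBy : Node → Option Node
  parent_root : parent root = none
  eq_root : ∀ n, parent n = none → n = root
  depth_root : depth root = 0
  depth_parent : ∀ n m, parent n = some m → depth n = depth m + 1

variable (T : LTree P I)

/-- The children of a node. -/
def Children (n : T.Node) : Set T.Node := {m | T.parent m = some n}

/-- A node is a leaf iff it has no children. -/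
def IsLeaf (n : T.Node) : Prop := ∀ m, T.parent m ≠ some n

/-- `Ancestor T m n`: `m` is a proper ancestor of `n`. -/
def Ancestor (m n : T.Node) : Prop :=
  Relation.TransGen (fun a b => T.parent b = some a) m n

/-- `IAnc T i m n`: `m` is an `i`-ancestor of `n`, i.e. a proper ancestor of
`n` connected to `n` by a path all of whose edges are labeled `i` or `ε`. -/
inductive IAnc (i : I) : T.Node → T.Node → Prop
  | single {m n} : T.parent n = some m →
      (T.elabel n = ELabel.eps ∨ T.elabel n = ELabel.ag i) → IAnc i m n
  | cons {m k n} : T.parent n = some k →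
      (T.elabel n = ELabel.eps ∨ T.elabel n = ELabel.ag i) →
      IAnc i m k → IAnc i m n

/-! ### The tableau construction -/

/-- A set of formulas is blatantly inconsistent iff it contains `⊥` or some
pair `ψ, ¬ψ`. -/
def Blatant (Γ : Set (Formula P I)) : Prop :=
  Formula.bot ∈ Γ ∨ ∃ ψ, ψ ∈ Γ ∧ Formula.neg ψ ∈ Γ

/-- `AutoChecked Γ φ` holds iff none of the expansion rules (a)-(g) is
applicable to `φ` in the label `Γ`; such formulas are (and remain) marked
``checked'' by step (h) of the construction. -/
def AutoChecked (Γ : Set (Formula P I)) : Formula P I → Prop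
  | .neg (.neg ψ) => ψ ∈ Γ
  | .and ψ χ => ψ ∈ Γ ∧ χ ∈ Γ
  | .neg (.and ψ χ) =>
      (Formula.neg ψ ∈ Γ ∧ Formula.neg χ ∈ Γ) ∨
      (Formula.neg ψ ∈ Γ ∧ χ ∈ Γ) ∨ (ψ ∈ Γ ∧ Formula.neg χ ∈ Γ)
  | .know _ ψ => ψ ∈ Γ
  | .neg (.know _ ψ) => Formula.neg ψ ∈ Γ ∨ ψ ∈ Γ
  | .kh i ψ => Formula.neg (Formula.know i ψ) ∈ Γ ∨ Formula.know i ψ ∈ Γ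
  | .neg (.kh i ψ) => Formula.neg (Formula.know i ψ) ∈ Γ
  | _ => True

/-- All formulas of `Γ` are checked; nodes with such labels are the ``and''
nodes (expanded by step (2)), the remaining expanded nodes are ``or'' nodes. -/
def Saturated (Γ : Set (Formula P I)) : Prop := ∀ φ ∈ Γ, AutoChecked Γ φ

/-- The labels of the children created when one of the rules (a)-(g) processes
the formula `φ` at a node labeled `Γ`. -/
def orOut (Γ : Set (Formula P I)) : Formula P I → Set (Set (Formula P I))
  | .neg (.neg ψ) => {insert ψ Γ}
  | .and ψ χ => {insert ψ (insert χ Γ)}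
  | .neg (.and ψ χ) =>
      {insert (Formula.neg ψ) (insert (Formula.neg χ) Γ),
       insert (Formula.neg ψ) (insert χ Γ),
       insert ψ (insert (Formula.neg χ) Γ)}
  | .know _ ψ => {insert ψ Γ}
  | .neg (.know _ ψ) => {insert (Formula.neg ψ) Γ, insert ψ Γ}
  | .kh i ψ =>
      {insert (Formula.neg (Formula.know i ψ)) Γ, insert (Formula.know i ψ) Γ}
  | .neg (.kh i ψ) => {insert (Formula.neg (Formula.know i ψ)) Γ}
  | _ => ∅

/-- `Σ(n,¬Kᵢψ) = {¬ψ} ∪ Γ|Kᵢ ∪ Γ|¬Kᵢ ∪ Γ|Khᵢ ∪ Γ|¬Khᵢ` where `Γ = L(n)`. -/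
def SigmaSet (Γ : Set (Formula P I)) (i : I) (ψ : Formula P I) :
    Set (Formula P I) :=
  insert (Formula.neg ψ)
    {φ ∈ Γ | (∃ χ, φ = Formula.know i χ) ∨ (∃ χ, φ = Formula.neg (Formula.know i χ)) ∨
             (∃ χ, φ = Formula.kh i χ) ∨ (∃ χ, φ = Formula.neg (Formula.kh i χ))}

/-- Expansion condition for ``or'' nodes (step (1), rules (a)-(g)): some
unchecked formula of the label is processed and the children of the node are
exactly the prescribed `ε`-children. -/
def OrNodeCond (n : T.Node) : Prop :=
  ∃ φ ∈ T.label n, ¬ AutoChecked (T.label n) φ ∧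
    (∀ Δ ∈ orOut (T.label n) φ,
      ∃ m, T.parent m = some n ∧ T.elabel m = ELabel.eps ∧ T.label m = Δ ∧
        T.blockedBy m = none) ∧
    (∀ m, T.parent m = some n →
      T.elabel m = ELabel.eps ∧ T.label m ∈ orOut (T.label n) φ ∧
        T.blockedBy m = none)

/-- Expansion condition for ``and'' nodes (step (2), rules (i), (j), (k)): the
children of the node are exactly those prescribed by the three rules, and a
(k)-child is blocked iff some ancestor carries the same label. -/
def AndNodeCond (n : T.Node) : Prop :=
  (∀ i ψ, Formula.neg (Formula.know i ψ) ∈ T.label n →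
    ¬ (∃ n', IAnc T i n' n ∧ T.label n' = SigmaSet (T.label n) i ψ) →
    ∃ m, T.parent m = some n ∧ T.elabel m = ELabel.ag i ∧
      T.label m = SigmaSet (T.label n) i ψ ∧ T.blockedBy m = none) ∧
  (∀ i ψ, Formula.kh i ψ ∈ T.label n → Formula.neg (Formula.know i ψ) ∈ T.label n →
    ∃ m, T.parent m = some n ∧ T.elabel m = ELabel.act i ψ ∧
      T.label m = {Formula.know i ψ} ∧ T.blockedBy m = none) ∧
  (∀ i ψ χ, Formula.neg (Formula.kh i χ) ∈ T.label n →
    Formula.kh i ψ ∈ T.label n → Formula.neg (Formula.know i ψ) ∈ T.label n →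
    ∃ m, T.parent m = some n ∧ T.elabel m = ELabel.act i ψ ∧
      T.label m = {Formula.know i ψ, Formula.neg (Formula.kh i χ)} ∧
      ((∃ n', Ancestor T n' m ∧ T.label n' = T.label m) ↔ T.blockedBy m ≠ none)) ∧
  (∀ m, T.parent m = some n →
    (∃ i ψ, T.elabel m = ELabel.ag i ∧ Formula.neg (Formula.know i ψ) ∈ T.label n ∧
      T.label m = SigmaSet (T.label n) i ψ ∧
      ¬ (∃ n', IAnc T i n' n ∧ T.label n' = SigmaSet (T.label n) i ψ)) ∨
    (∃ i ψ, T.elabel m = ELabel.act i ψ ∧ Formula.kh i ψ ∈ T.label n ∧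
      Formula.neg (Formula.know i ψ) ∈ T.label n ∧
      T.label m = {Formula.know i ψ}) ∨
    (∃ i ψ χ, T.elabel m = ELabel.act i ψ ∧ Formula.neg (Formula.kh i χ) ∈ T.label n ∧
      Formula.kh i ψ ∈ T.label n ∧ Formula.neg (Formula.know i ψ) ∈ T.label n ∧
      T.label m = {Formula.know i ψ, Formula.neg (Formula.kh i χ)}))

/-- `T` is a tableau for `φ₀`: the root is labeled `{φ₀}`, blocked nodes are
blocked by an ancestor with the same label, blocked nodes and blatantly
inconsistent nodes are leaves, and every other node is expanded according to
step (1) (``or'' nodes) or step (2) (``and'' nodes) of the construction. -/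
structure IsTableau (φ0 : Formula P I) (T : LTree P I) : Prop where
  root_label : T.label T.root = {φ0}
  blocked_spec : ∀ n n', T.blockedBy n = some n' →
    Ancestor T n' n ∧ T.label n' = T.label n
  blocked_leaf : ∀ n, T.blockedBy n ≠ none → IsLeaf T n
  blatant_leaf : ∀ n, Blatant (T.label n) → IsLeaf T n
  or_node : ∀ n, ¬ Blatant (T.label n) → T.blockedBy n = none →
    ¬ Saturated (T.label n) → OrNodeCond T n
  and_node : ∀ n, ¬ Blatant (T.label n) → T.blockedBy n = none →
    Saturated (T.label n) → AndNodeCond T n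

/-! ### Subtrees -/

/-- A subtree: a set of nodes containing the root and closed under parents. -/
def IsSubtree (S : Set T.Node) : Prop :=
  T.root ∈ S ∧ ∀ n ∈ S, ∀ m, T.parent n = some m → m ∈ S

/-- A complete subtree: it contains the root, all children of each of its
``and'' non-leaf nodes, and at least one child of each of its ``or'' non-leaf
nodes. -/
def CompleteSubtree (S : Set T.Node) : Prop :=
  IsSubtree T S ∧
  (∀ n ∈ S, ¬ IsLeaf T n → Saturated (T.label n) → ∀ m ∈ Children T n, m ∈ S) ∧
  (∀ n ∈ S, ¬ IsLeaf T n → ¬ Saturated (T.label n) → ∃ m ∈ Children T n, m ∈ S)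

/-- A subtree is closed iff some of its nodes has a blatantly inconsistent
label; otherwise it is open. -/
def ClosedSubtree (S : Set T.Node) : Prop := ∃ n ∈ S, Blatant (T.label n)

/-- A tableau is closed iff all its complete subtrees are closed. -/
def TableauClosed : Prop := ∀ S : Set T.Node, CompleteSubtree T S → ClosedSubtree T S

/-! ### Maximal ε-paths and the induced model -/

/-- An `ε`-edge from `m` down to `n` inside the node set `S`. -/
def EpsStep (S : Set T.Node) (m n : T.Node) : Prop :=
  m ∈ S ∧ n ∈ S ∧ T.parent n = some m ∧ T.elabel n = ELabel.eps

/-- `n` is an `ε`-descendant of `m` inside `S` (reflexive-transitive). -/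
def EpsDesc (S : Set T.Node) : T.Node → T.Node → Prop :=
  Relation.ReflTransGen (EpsStep T S)

/-- A maximal `ε`-path of the subtree with node set `S`, recorded by its
initial node `top` and its end node `bot`.  Its label is `T.label bot`. -/
structure MaxEpsPath (T : LTree P I) (S : Set T.Node) where
  top : T.Node
  bot : T.Node
  top_mem : top ∈ S
  bot_mem : bot ∈ S
  desc : EpsDesc T S top bot
  top_max : ∀ m, ¬ EpsStep T S m top
  bot_max : ∀ m, ¬ EpsStep T S bot m

/-- The states of the induced model: non-blocked maximal `ε`-paths. -/
def PathW (T : LTree P I) (S : Set T.Node) : Type :=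
  {ρ : MaxEpsPath T S // T.blockedBy ρ.bot = none}

/-- `ρ₂` is an `i`-child path of `ρ₁`: `ρ₁ρ₂` is a path whose connecting edge
is labeled `i`. -/
def ISimStep (S : Set T.Node) (i : I) (ρ1 ρ2 : PathW T S) : Prop :=
  T.parent ρ2.1.top = some ρ1.1.bot ∧ T.elabel ρ2.1.top = ELabel.ag i

/-- The node `n'` lies on the maximal `ε`-path `ρ`. -/
def OnPath (S : Set T.Node) (ρ : MaxEpsPath T S) (n' : T.Node) : Prop :=
  EpsDesc T S ρ.top n' ∧ EpsDesc T S n' ρ.bot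

/-- The model `M^T` induced by the (complete) subtree with node set `S`:
states are the non-blocked maximal `ε`-paths, `∼ᵢ` is the least equivalence
relation containing the `i`-edge steps, actions of agent `i` are the actions
`a_{Khᵢψ}` labeling edges of the subtree, `(ρ, ρ') ∈ R_a` iff there is an
`a`-edge from the end of `ρ` to the start of a maximal `ε`-path `ρ''` where
`ρ'' = ρ'` or `ρ''` is blocked by a node lying on `ρ'`, and `ρ ∈ V(p)` iff
`p ∈ L(ρ)`. -/
def inducedModel (T : LTree P I) (S : Set T.Node) : Model P I where
  W := PathW T S
  sim := fun i => Relation.EqvGen (ISimStep T S i)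
  equiv := fun _ => Relation.EqvGen.is_equivalence _
  Act := fun i => {ψ : Formula P I // ∃ m n, m ∈ S ∧ n ∈ S ∧
    T.parent m = some n ∧ T.elabel m = ELabel.act i ψ}
  R := fun i a ρ1 ρ2 => ∃ ρ'' : MaxEpsPath T S,
    T.parent ρ''.top = some ρ1.1.bot ∧ T.elabel ρ''.top = ELabel.act i a.1 ∧
    (ρ'' = ρ2.1 ∨ ∃ n', T.blockedBy ρ''.bot = some n' ∧ OnPath T S ρ2.1 n')
  V := fun ρ p => Formula.atom p ∈ T.label ρ.1.bot

/-- `L(ρ)|Kᵢ`: the `Kᵢ`-formulas of `Γ`. -/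
def projK (i : I) (Γ : Set (Formula P I)) : Set (Formula P I) :=
  {φ ∈ Γ | ∃ ψ, φ = Formula.know i ψ}

/-- `L(ρ)|¬Kᵢ`: the `¬Kᵢ`-formulas of `Γ`. -/
def projNK (i : I) (Γ : Set (Formula P I)) : Set (Formula P I) :=
  {φ ∈ Γ | ∃ ψ, φ = Formula.neg (Formula.know i ψ)}

/-- `L(ρ)|Khᵢ`: the `Khᵢ`-formulas of `Γ`. -/
def projKh (i : I) (Γ : Set (Formula P I)) : Set (Formula P I) :=
  {φ ∈ Γ | ∃ ψ, φ = Formula.kh i ψ}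

/-- `L(ρ)|¬Khᵢ`: the `¬Khᵢ`-formulas of `Γ`. -/
def projNKh (i : I) (Γ : Set (Formula P I)) : Set (Formula P I) :=
  {φ ∈ Γ | ∃ ψ, φ = Formula.neg (Formula.kh i ψ)}

/-!
An `i`-edge of the tableau leaves a saturated node `n`, and its end carries `Σ(n,¬Kᵢψ)`, which
contains every `Kᵢ`-, `¬Kᵢ`-, `Khᵢ`- and `¬Khᵢ`-formula of `L(n)`. Following `ε`-edges only enlarges
labels, so these formulas survive to the end of the next path. Nor can a new one appear there: up to
leading negations, rules (a)-(g) produce only formulas on which the saturated set `L(n)` has already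
taken a side, so a new one would have its complement in `L(n)`, and the complement would also have
survived, making the final label blatantly inconsistent.
-/

section

variable {T} {S : Set T.Node} {Γ Δ Θ : Set (Formula P I)} {φ ψ φ0 : Formula P I} {i : I}
  {m n : T.Node}

/-- The formula obtained by deleting all leading negations. -/
def Formula.stripNeg : Formula P I → Formula P I
  | .neg φ => stripNeg φ
  | φ => φ

/-- The formulas on which `Γ` takes a side. Leading negations are ignored, since a saturated set
containing `φ` need not contain `¬¬φ`, whereas this set is to be closed under negation. -/
def decided (Γ : Set (Formula P I)) : Set (Formula P I) :=
  {φ | φ.stripNeg ∈ Γ ∨ Formula.neg φ.stripNeg ∈ Γ}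

theorem neg_mem_decided : Formula.neg φ ∈ decided Γ ↔ φ ∈ decided Γ :=
  Iff.rfl

namespace Saturated

theorem mem_decided (hΓ : Saturated Γ) (hφ : φ ∈ Γ ∨ Formula.neg φ ∈ Γ) : φ ∈ decided Γ := by
  induction φ with
  | neg χ ih => exact ih (hφ.symm.imp_left (hΓ _))
  | _ => exact hφ

theorem subset_decided (hΓ : Saturated Γ) : Γ ⊆ decided Γ :=
  fun _ hφ => hΓ.mem_decided (.inl hφ)

theorem mem_decided_of_know (hΓ : Saturated Γ) (h : Formula.know i φ ∈ decided Γ) :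
    φ ∈ decided Γ :=
  hΓ.mem_decided <| h.elim (fun hK => .inl (hΓ _ hK)) fun hNK => (hΓ _ hNK).symm

theorem know_mem_decided_of_kh (hΓ : Saturated Γ) (h : Formula.kh i φ ∈ decided Γ) :
    Formula.know i φ ∈ decided Γ :=
  h.elim (fun hKh => (hΓ _ hKh).symm) fun hNKh => .inr (hΓ _ hNKh)

theorem mem_decided_of_and (hΓ : Saturated Γ) (h : Formula.and φ ψ ∈ decided Γ) :
    φ ∈ decided Γ ∧ ψ ∈ decided Γ := by
  suffices (φ ∈ Γ ∨ Formula.neg φ ∈ Γ) ∧ (ψ ∈ Γ ∨ Formula.neg ψ ∈ Γ) from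
    this.imp hΓ.mem_decided hΓ.mem_decided
  rcases h with hand | hnand
  · exact (hΓ _ hand).imp .inl .inl
  · rcases hΓ _ hnand with ⟨hφ, hψ⟩ | ⟨hφ, hψ⟩ | ⟨hφ, hψ⟩
    exacts [⟨.inr hφ, .inr hψ⟩, ⟨.inr hφ, .inl hψ⟩, ⟨.inl hφ, .inr hψ⟩]

theorem subset_decided_of_mem_orOut (hΓ : Saturated Γ) (hΘ : Θ ⊆ decided Γ) (hφ : φ ∈ Θ)
    (hΔ : Δ ∈ orOut Θ φ) : Δ ⊆ decided Γ := by
  match φ, hΘ hφ, hΔ with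
  | .neg (.neg _), hψ, hΔ =>
    obtain rfl := hΔ
    exact Set.insert_subset hψ hΘ
  | .and _ _, hand, hΔ =>
    obtain ⟨hψ, hχ⟩ := hΓ.mem_decided_of_and hand
    obtain rfl := hΔ
    exact Set.insert_subset hψ (Set.insert_subset hχ hΘ)
  | .neg (.and _ _), hnand, hΔ =>
    obtain ⟨hψ, hχ⟩ := hΓ.mem_decided_of_and (neg_mem_decided.mp hnand)
    rcases hΔ with rfl | rfl | rfl <;> exact Set.insert_subset hψ (Set.insert_subset hχ hΘ)
  | .know _ _, hK, hΔ =>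
    obtain rfl := hΔ
    exact Set.insert_subset (hΓ.mem_decided_of_know hK) hΘ
  | .neg (.know _ _), hNK, hΔ =>
    have hψ := hΓ.mem_decided_of_know (neg_mem_decided.mp hNK)
    rcases hΔ with rfl | rfl <;> exact Set.insert_subset hψ hΘ
  | .kh _ _, hKh, hΔ =>
    have hK := hΓ.know_mem_decided_of_kh hKh
    rcases hΔ with rfl | rfl <;> exact Set.insert_subset hK hΘ
  | .neg (.kh _ _), hNKh, hΔ =>
    obtain rfl := hΔ
    exact Set.insert_subset (hΓ.know_mem_decided_of_kh (neg_mem_decided.mp hNKh)) hΘ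

theorem sigmaSet_subset_decided (hΓ : Saturated Γ) (hψ : Formula.neg (.know i ψ) ∈ Γ) :
    SigmaSet Γ i ψ ⊆ decided Γ :=
  Set.insert_subset (neg_mem_decided.mpr (hΓ.mem_decided_of_know (.inr hψ)))
    fun _ hφ => hΓ.subset_decided hφ.1

end Saturated

theorem subset_of_mem_orOut (hΔ : Δ ∈ orOut Γ φ) : Γ ⊆ Δ := by
  intro χ hχ
  unfold orOut at hΔ
  split at hΔ <;> simp only [Set.mem_insert_iff, Set.mem_singleton_iff,
    Set.mem_empty_iff_false] at hΔ
  all_goals rcases hΔ with rfl | rfl | rfl <;> simp only [Set.mem_insert_iff, hχ, or_true]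

/-- The formulas of the forms `Kᵢχ`, `¬Kᵢχ`, `Khᵢχ`, `¬Khᵢχ`, which `Σ(n,¬Kᵢψ)` inherits
from `L(n)`. -/
def IsEpistemic (i : I) (φ : Formula P I) : Prop :=
  (∃ χ, φ = Formula.know i χ) ∨ (∃ χ, φ = Formula.neg (Formula.know i χ)) ∨
    (∃ χ, φ = Formula.kh i χ) ∨ (∃ χ, φ = Formula.neg (Formula.kh i χ))

/-- The union of `Γ|Kᵢ`, `Γ|¬Kᵢ`, `Γ|Khᵢ` and `Γ|¬Khᵢ`. -/
def epistemicPart (i : I) (Γ : Set (Formula P I)) : Set (Formula P I) :=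
  {φ ∈ Γ | IsEpistemic i φ}

theorem epistemicPart_subset_sigmaSet : epistemicPart i Γ ⊆ SigmaSet Γ i ψ :=
  Set.subset_insert _ _

theorem sep_eq_of_epistemicPart_eq {p : Formula P I → Prop} (hp : ∀ φ, p φ → IsEpistemic i φ)
    (h : epistemicPart i Γ = epistemicPart i Δ) : {φ ∈ Γ | p φ} = {φ ∈ Δ | p φ} := by
  ext φ
  refine and_congr_left fun hφ => ?_
  simpa only [epistemicPart, Set.mem_ofPred_eq, hp φ hφ, and_true] using Set.ext_iff.mp h φ

theorem projections_eq_of_epistemicPart_eq (h : epistemicPart i Γ = epistemicPart i Δ) :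
    projK i Γ = projK i Δ ∧ projNK i Γ = projNK i Δ ∧
      projKh i Γ = projKh i Δ ∧ projNKh i Γ = projNKh i Δ :=
  ⟨sep_eq_of_epistemicPart_eq (fun _ hφ => .inl hφ) h,
    sep_eq_of_epistemicPart_eq (fun _ hφ => .inr (.inl hφ)) h,
    sep_eq_of_epistemicPart_eq (fun _ hφ => .inr (.inr (.inl hφ))) h,
    sep_eq_of_epistemicPart_eq (fun _ hφ => .inr (.inr (.inr hφ))) h⟩

theorem epistemicPart_eq_of_subset_of_subset_decided (hsub : epistemicPart i Γ ⊆ Δ)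
    (hdec : Δ ⊆ decided Γ) (hcons : ¬ Blatant Δ) : epistemicPart i Γ = epistemicPart i Δ := by
  refine Set.Subset.antisymm (fun φ hφ => ⟨hsub hφ, hφ.2⟩) ?_
  have not_both : ∀ {χ}, χ ∈ Δ → Formula.neg χ ∉ Δ := fun hχ hnχ => hcons (.inr ⟨_, hχ, hnχ⟩)
  rintro φ ⟨hφ, hepi⟩
  refine ⟨?_, hepi⟩
  have hside : φ.stripNeg ∈ Γ ∨ Formula.neg φ.stripNeg ∈ Γ := hdec hφ
  rcases hepi with ⟨χ, rfl⟩ | ⟨χ, rfl⟩ | ⟨χ, rfl⟩ | ⟨χ, rfl⟩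
  · exact hside.resolve_right fun h => not_both hφ (hsub ⟨h, .inr (.inl ⟨χ, rfl⟩)⟩)
  · exact hside.resolve_left fun h => not_both (hsub ⟨h, .inl ⟨χ, rfl⟩⟩) hφ
  · exact hside.resolve_right fun h => not_both hφ (hsub ⟨h, .inr (.inr (.inr ⟨χ, rfl⟩))⟩)
  · exact hside.resolve_left fun h => not_both (hsub ⟨h, .inr (.inr (.inl ⟨χ, rfl⟩))⟩) hφ

namespace IsTableau

theorem orNodeCond_or_andNodeCond_of_parent (hT : IsTableau φ0 T) (hp : T.parent n = some m) :
    OrNodeCond T m ∨ Saturated (T.label m) ∧ AndNodeCond T m := by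
  have hcons : ¬ Blatant (T.label m) := fun hb => hT.blatant_leaf m hb n hp
  have hunblocked : T.blockedBy m = none := by
    by_contra hb
    exact hT.blocked_leaf m hb n hp
  by_cases hsat : Saturated (T.label m)
  · exact .inr ⟨hsat, hT.and_node m hcons hunblocked hsat⟩
  · exact .inl (hT.or_node m hcons hunblocked hsat)

theorem exists_label_mem_orOut_of_eps (hT : IsTableau φ0 T) (hp : T.parent n = some m)
    (he : T.elabel n = ELabel.eps) : ∃ φ ∈ T.label m, T.label n ∈ orOut (T.label m) φ := by
  rcases hT.orNodeCond_or_andNodeCond_of_parent hp with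
    ⟨φ, hφ, -, -, hchild⟩ | ⟨-, -, -, -, hchild⟩
  · exact ⟨φ, hφ, (hchild n hp).2.1⟩
  · rcases hchild n hp with ⟨_, _, h, -⟩ | ⟨_, _, h, -⟩ | ⟨_, _, _, h, -⟩ <;> simp [he] at h

theorem exists_label_eq_sigmaSet_of_ag (hT : IsTableau φ0 T) (hp : T.parent n = some m)
    (he : T.elabel n = ELabel.ag i) :
    Saturated (T.label m) ∧ ∃ ψ, Formula.neg (.know i ψ) ∈ T.label m ∧
      T.label n = SigmaSet (T.label m) i ψ := by
  rcases hT.orNodeCond_or_andNodeCond_of_parent hp with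
    ⟨_, -, -, -, hchild⟩ | ⟨hsat, -, -, -, hchild⟩
  · simpa [he] using (hchild n hp).1
  · rcases hchild n hp with ⟨j, ψ, h, hψ, hn, -⟩ | ⟨_, _, h, -⟩ | ⟨_, _, _, h, -⟩
    · obtain rfl : i = j := ELabel.ag.inj (he.symm.trans h)
      exact ⟨hsat, ψ, hψ, hn⟩
    all_goals simp [he] at h

theorem label_subset_of_epsDesc (hT : IsTableau φ0 T) (h : EpsDesc T S m n) :
    T.label m ⊆ T.label n := by
  induction h with
  | refl => exact subset_rfl
  | tail _ hstep ih =>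
    obtain ⟨φ, -, hlabel⟩ := hT.exists_label_mem_orOut_of_eps hstep.2.2.1 hstep.2.2.2
    exact ih.trans (subset_of_mem_orOut hlabel)

theorem label_subset_decided_of_epsDesc (hT : IsTableau φ0 T) (hΓ : Saturated Γ)
    (h : EpsDesc T S m n) (hm : T.label m ⊆ decided Γ) : T.label n ⊆ decided Γ := by
  induction h with
  | refl => exact hm
  | tail _ hstep ih =>
    obtain ⟨φ, hφ, hlabel⟩ := hT.exists_label_mem_orOut_of_eps hstep.2.2.1 hstep.2.2.2
    exact hΓ.subset_decided_of_mem_orOut ih hφ hlabel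

theorem epistemicPart_eq_of_iSimStep (hT : IsTableau φ0 T) {ρ ρ' : PathW T S}
    (hcons : ¬ Blatant (T.label ρ'.1.bot)) (h : ISimStep T S i ρ ρ') :
    epistemicPart i (T.label ρ.1.bot) = epistemicPart i (T.label ρ'.1.bot) := by
  obtain ⟨hsat, ψ, hψ, htop⟩ := hT.exists_label_eq_sigmaSet_of_ag h.1 h.2
  have hpersist : SigmaSet (T.label ρ.1.bot) i ψ ⊆ T.label ρ'.1.bot :=
    htop ▸ hT.label_subset_of_epsDesc ρ'.1.desc
  have hdecided : T.label ρ'.1.bot ⊆ decided (T.label ρ.1.bot) :=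
    hT.label_subset_decided_of_epsDesc hsat ρ'.1.desc (htop ▸ hsat.sigmaSet_subset_decided hψ)
  exact epistemicPart_eq_of_subset_of_subset_decided
    (epistemicPart_subset_sigmaSet.trans hpersist) hdecided hcons

end IsTableau

theorem sim_states_share_K_and_Kh_general (hT : IsTableau φ0 T) (hopen : ¬ ClosedSubtree T S)
    {ρ1 ρ2 : (inducedModel T S).W} (hsim : (inducedModel T S).sim i ρ1 ρ2) :
    projK i (T.label ρ1.1.bot) = projK i (T.label ρ2.1.bot) ∧
    projNK i (T.label ρ1.1.bot) = projNK i (T.label ρ2.1.bot) ∧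
    projKh i (T.label ρ1.1.bot) = projKh i (T.label ρ2.1.bot) ∧
    projNKh i (T.label ρ1.1.bot) = projNKh i (T.label ρ2.1.bot) := by
  let part : PathW T S → Set (Formula P I) := fun ρ => epistemicPart i (T.label ρ.1.bot)
  have hstep : ∀ ρ ρ', ISimStep T S i ρ ρ' → part ρ = part ρ' := fun ρ ρ' h =>
    hT.epistemicPart_eq_of_iSimStep (fun hb => hopen ⟨_, ρ'.1.bot_mem, hb⟩) h
  exact projections_eq_of_epistemicPart_eq
    (Setoid.eqvGen_le (s := Setoid.ker part) hstep hsim)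

end

/-- in the model induced by a complete open subtree,
`∼ᵢ`-related states share the same `Kᵢ`-, `¬Kᵢ`-, `Khᵢ`- and `¬Khᵢ`-formulas
in their labels. -/
theorem sim_states_share_K_and_Kh {P I : Type} (hI : ∃ i j : I, i ≠ j)
    (φ0 : Formula P I) (T : LTree P I) (hT : IsTableau φ0 T)
    (S : Set T.Node) (hcomp : CompleteSubtree T S) (hopen : ¬ ClosedSubtree T S)
    (i : I) (ρ1 ρ2 : (inducedModel T S).W)
    (hsim : (inducedModel T S).sim i ρ1 ρ2) :
    projK i (T.label ρ1.1.bot) = projK i (T.label ρ2.1.bot) ∧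
    projNK i (T.label ρ1.1.bot) = projNK i (T.label ρ2.1.bot) ∧
    projKh i (T.label ρ1.1.bot) = projKh i (T.label ρ2.1.bot) ∧
    projNKh i (T.label ρ1.1.bot) = projNKh i (T.label ρ2.1.bot) :=
  sim_states_share_K_and_Kh_general hT hopen hsim

end ELKh
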